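/- Let n ≥ 1 be a natural number, let α ∈ (4n−3, 4n−1), set ν = (1−α)/2, and let λ satisfy 0 < λ < j_{ν,1}². Then forerall real numbers r, s₀ with 0 < r ≤ s₀ ≤ 1, J_{−ν}(s₀·√λ)·J_{ν−1}(r·√λ) + J_ν(s₀·√λ)·J_{1−ν}(r·√λ) ≤ 0. -/

import Mathlib

/-- The Bessel function of the first kind of real order `μ`. -/
noncomputable def besselJ (μ x : ℝ) : ℝ :=
  ∑' m : ℕ, ((-1 : ℝ) ^ m / ((m.factorial : ℝ) * Real.Gamma ((m : ℝ) + μ + 1))) *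
    (x / 2) ^ (2 * (m : ℝ) + μ)

/-!
Put `g = J_{-ν} / J_ν` on `(0, √λ]`, where `J_ν > 0`. The Wronskian identity
`J_{-ν} J_{ν-1} + J_ν J_{1-ν} = 2 sin (π ν) / (π x)`, whose right-hand side is negative for the
orders at hand, gives both `g' > 0` and the negativity of the combination on the diagonal `x = y`.
Moreover `x ^ (1 - ν) J_{ν-1}` has derivative `-x ^ (1 - ν) J_ν < 0` and a negative limit at `0`,
so `J_{ν-1} < 0`. Hence, for `y ≤ x`,
`J_{-ν}(x) J_{ν-1}(y) + J_ν(x) J_{1-ν}(y) = J_ν(x) (g(x) J_{ν-1}(y) + J_{1-ν}(y))`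
only grows when `g(x)` is replaced by `g(y)`, and the result is `J_ν(x) / J_ν(y)` times the
combination at `(y, y)`. The behaviour at `0` is read off the entire factor of `J_ν`.
-/

open Real Set Filter

theorem hasDerivAt_tsum_mul_pow {𝕜 : Type*} [RCLike 𝕜] {a : ℕ → 𝕜}
    (ha : ∀ z, Summable fun m : ℕ ↦ (m + 1) * a (m + 1) * z ^ m) (z : 𝕜) :
    HasDerivAt (fun z ↦ ∑' m, a m * z ^ m) (∑' m : ℕ, (m + 1) * a (m + 1) * z ^ m) z := by
  set R : ℝ := ‖z‖ + 1
  have shift (y : 𝕜) (m : ℕ) : a (m + 1) * ((m + 1 : ℕ) * y ^ (m + 1 - 1)) =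
      (m + 1) * a (m + 1) * y ^ m := by
    rw [Nat.add_sub_cancel]
    push_cast
    ring
  have summable_bound : Summable fun m : ℕ ↦ ‖a m * (m * (R : 𝕜) ^ (m - 1))‖ :=
    (summable_nat_add_iff 1).1 <| (ha R).norm.congr fun m ↦ by rw [shift]
  have norm_le_bound (m : ℕ) (y : 𝕜) (hy : y ∈ Metric.ball 0 R) :
      ‖a m * (m * y ^ (m - 1))‖ ≤ ‖a m * (m * (R : 𝕜) ^ (m - 1))‖ := by
    rw [mem_ball_zero_iff] at hy
    simp only [norm_mul, norm_pow, RCLike.norm_ofReal]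
    gcongr
    exact hy.le.trans (le_abs_self R)
  have summable_zero : Summable fun m ↦ a m * (0 : 𝕜) ^ m :=
    summable_of_ne_finset_zero (s := {0}) fun m hm ↦ by simp_all
  have zero_mem : (0 : 𝕜) ∈ Metric.ball 0 R := Metric.mem_ball_self (by positivity)
  have z_mem : z ∈ Metric.ball 0 R := mem_ball_zero_iff.2 (lt_add_one _)
  refine (hasDerivAt_tsum_of_isPreconnected summable_bound Metric.isOpen_ball
    (convex_ball 0 R).isPreconnected (fun m y _ ↦ (hasDerivAt_pow m y).const_mul (a m))
    norm_le_bound zero_mem summable_zero z_mem).congr_deriv ?_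
  rw [tsum_eq_zero_add' ((ha z).congr fun m ↦ (shift z m).symm)]
  simp only [shift, Nat.cast_zero, zero_mul, mul_zero, zero_add]

theorem inv_Gamma_eq_self_mul_inv_Gamma_add_one (s : ℝ) :
    (Gamma s)⁻¹ = s * (Gamma (s + 1))⁻¹ := by
  have h := Complex.one_div_Gamma_eq_self_mul_one_div_Gamma_add_one s
  rw [← Complex.ofReal_one, ← Complex.ofReal_add, Complex.Gamma_ofReal, Complex.Gamma_ofReal] at h
  exact_mod_cast h

theorem Gamma_neg_of_sin_pi_mul_neg {ν : ℝ} (hν : ν < 1) (hsin : sin (π * ν) < 0) :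
    Gamma ν < 0 := by
  have hprod : Gamma ν * Gamma (1 - ν) < 0 := by
    rw [Gamma_mul_Gamma_one_sub]
    exact div_neg_of_pos_of_neg pi_pos hsin
  exact neg_of_mul_neg_left hprod (Gamma_pos_of_pos (sub_pos.2 hν)).le

theorem sin_pi_mul_neg_of_mem_Ioo {ν : ℝ} {k : ℤ} (hν : ν ∈ Ioo (2 * k - 1 : ℝ) (2 * k)) :
    sin (π * ν) < 0 := by
  rw [← sin_sub_int_mul_two_pi _ k]
  apply sin_neg_of_neg_of_neg_pi_lt <;> nlinarith [hν.1, hν.2, pi_pos]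

/-- The `m`-th Taylor coefficient at `0` of the Bessel–Clifford function of order `ν`. It is `0`
when `m + ν + 1` is a pole of `Γ`, since Mathlib sets `Γ = 0` there. -/
noncomputable def besselCliffordCoeff (ν : ℝ) (m : ℕ) : ℝ :=
  (m.factorial * Gamma (m + ν + 1))⁻¹

/-- The Bessel–Clifford function `C_ν`, the entire factor of the Bessel function in
`J_ν(x) = (x / 2) ^ ν * C_ν(-(x / 2) ^ 2)`. -/
noncomputable def besselClifford (ν z : ℝ) : ℝ :=
  ∑' m, besselCliffordCoeff ν m * z ^ m

section BesselClifford

variable (ν : ℝ)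

theorem succ_mul_besselCliffordCoeff_succ (m : ℕ) :
    (m + 1) * besselCliffordCoeff ν (m + 1) = besselCliffordCoeff (ν + 1) m := by
  have hm : (m + 1 : ℝ) ≠ 0 := by positivity
  simp only [besselCliffordCoeff, Nat.factorial_succ]
  push_cast
  rw [show (m : ℝ) + 1 + ν + 1 = m + (ν + 1) + 1 by ring, mul_assoc, mul_inv,
    mul_inv_cancel_left₀ hm]

theorem besselCliffordCoeff_sub_one (m : ℕ) :
    besselCliffordCoeff (ν - 1) m = (m + ν) * besselCliffordCoeff ν m := by
  rw [besselCliffordCoeff, besselCliffordCoeff, mul_inv, mul_inv,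
    show (m : ℝ) + (ν - 1) + 1 = m + ν by ring, inv_Gamma_eq_self_mul_inv_Gamma_add_one]
  ring

theorem besselCliffordCoeff_eq_mul_succ (m : ℕ) :
    besselCliffordCoeff ν m = (m + 1) * (m + ν + 1) * besselCliffordCoeff ν (m + 1) := by
  have h := besselCliffordCoeff_sub_one (ν + 1) m
  rw [add_sub_cancel_right, ← succ_mul_besselCliffordCoeff_succ] at h
  rw [h]
  ring

theorem summable_besselCliffordCoeff_mul_pow (z : ℝ) :
    Summable fun m ↦ besselCliffordCoeff ν m * z ^ m := by
  have shift_large : ∀ᶠ m : ℕ in atTop, 2 * |z| ≤ m + ν + 1 := by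
    filter_upwards [tendsto_natCast_atTop_atTop.eventually_ge_atTop (2 * |z| - ν - 1)] with m hm
    linarith
  refine summable_of_ratio_norm_eventually_le one_half_lt_one ?_
  filter_upwards [shift_large] with m hm
  have factor_large : 2 * |z| ≤ |(m : ℝ) + 1| * |m + ν + 1| := by
    rw [← abs_mul]
    refine le_trans ?_ (le_abs_self _)
    nlinarith [abs_nonneg z, m.cast_nonneg (α := ℝ)]
  rw [besselCliffordCoeff_eq_mul_succ ν m]
  simp only [norm_mul, norm_pow, Real.norm_eq_abs, pow_succ]
  calc |besselCliffordCoeff ν (m + 1)| * (|z| ^ m * |z|)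
      = 1 / 2 * ((2 * |z|) * |besselCliffordCoeff ν (m + 1)| * |z| ^ m) := by ring
    _ ≤ 1 / 2 * (|(m : ℝ) + 1| * |m + ν + 1| * |besselCliffordCoeff ν (m + 1)| * |z| ^ m) := by
      gcongr

theorem hasSum_besselClifford (z : ℝ) :
    HasSum (fun m ↦ besselCliffordCoeff ν m * z ^ m) (besselClifford ν z) :=
  (summable_besselCliffordCoeff_mul_pow ν z).hasSum

theorem hasDerivAt_besselClifford (z : ℝ) :
    HasDerivAt (besselClifford ν) (besselClifford (ν + 1) z) z := by
  have h := hasDerivAt_tsum_mul_pow (a := besselCliffordCoeff ν) (z := z) fun y ↦ by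
    simpa only [succ_mul_besselCliffordCoeff_succ] using
      (hasSum_besselClifford (ν + 1) y).summable
  simp only [succ_mul_besselCliffordCoeff_succ] at h
  exact h

theorem continuous_besselClifford : Continuous (besselClifford ν) :=
  continuous_iff_continuousAt.2 fun z ↦ (hasDerivAt_besselClifford ν z).continuousAt

theorem besselClifford_zero : besselClifford ν 0 = (Gamma (ν + 1))⁻¹ := by
  rw [besselClifford, tsum_eq_single 0 fun m hm ↦ by simp [hm]]
  simp [besselCliffordCoeff]

theorem besselClifford_sub_one (z : ℝ) :
    besselClifford (ν - 1) z = ν * besselClifford ν z + z * besselClifford (ν + 1) z := by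
  have hν := (hasSum_besselClifford ν z).mul_left ν
  have hsucc : HasSum (fun m : ℕ ↦ m * besselCliffordCoeff ν m * z ^ m)
      (z * besselClifford (ν + 1) z) := by
    rw [← hasSum_nat_add_iff' 1]
    simpa [succ_mul_besselCliffordCoeff_succ, pow_succ', mul_left_comm] using
      (hasSum_besselClifford (ν + 1) z).mul_left z
  refine HasSum.tsum_eq ((hν.add hsucc).congr_fun fun m ↦ ?_)
  rw [besselCliffordCoeff_sub_one]
  ring

theorem besselClifford_wronskian (z : ℝ) :
    besselClifford (-ν) z * besselClifford (ν - 1) z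
      - z * (besselClifford ν z * besselClifford (1 - ν) z) = sin (π * ν) / π := by
  set W : ℝ → ℝ := fun z ↦ besselClifford (-ν) z * besselClifford (ν - 1) z
      - z * (besselClifford ν z * besselClifford (1 - ν) z) with hW
  have hasDerivAt_W (y : ℝ) : HasDerivAt W 0 y := by
    have hneg := hasDerivAt_besselClifford (-ν) y
    have hsub := hasDerivAt_besselClifford (ν - 1) y
    have hrec := besselClifford_sub_one (1 - ν) y
    rw [neg_add_eq_sub] at hneg
    rw [sub_add_cancel] at hsub
    rw [sub_sub_cancel_left] at hrec
    refine ((hneg.mul hsub).sub ((hasDerivAt_id y).mul ((hasDerivAt_besselClifford ν y).mul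
      (hasDerivAt_besselClifford (1 - ν) y)))).congr_deriv ?_
    simp only [id, Pi.mul_apply]
    linear_combination besselClifford (1 - ν) y * besselClifford_sub_one ν y
      + besselClifford ν y * hrec
  calc W z = W 0 := is_const_of_deriv_eq_zero (fun y ↦ (hasDerivAt_W y).differentiableAt)
        (fun y ↦ (hasDerivAt_W y).deriv) z 0
    _ = (Gamma ν * Gamma (1 - ν))⁻¹ := by
      simp only [hW, besselClifford_zero, neg_add_eq_sub, sub_add_cancel, zero_mul, sub_zero,
        mul_inv, mul_comm]
    _ = sin (π * ν) / π := by rw [Gamma_mul_Gamma_one_sub, inv_div]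

end BesselClifford

section BesselJ

variable {ν x : ℝ}

theorem besselJ_eq_rpow_mul_besselClifford (ν : ℝ) (hx : 0 < x) :
    besselJ ν x = (x / 2) ^ ν * besselClifford ν (-(x / 2) ^ 2) := by
  rw [besselJ, besselClifford, ← tsum_mul_left]
  refine tsum_congr fun m ↦ ?_
  rw [rpow_add (half_pos hx), show (2 * m : ℝ) = (2 * m : ℕ) by push_cast; rfl, rpow_natCast,
    pow_mul, neg_pow ((x / 2) ^ 2), besselCliffordCoeff, div_eq_mul_inv ((-1 : ℝ) ^ m)]
  ac_rfl

theorem besselJ_two_mul_sqrt_neg (ν : ℝ) {z : ℝ} (hz : z < 0) :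
    besselJ ν (2 * √(-z)) = √(-z) ^ ν * besselClifford ν z := by
  have hsqrt : 0 < √(-z) := sqrt_pos.2 (neg_pos.2 hz)
  rw [besselJ_eq_rpow_mul_besselClifford ν (by positivity), mul_div_cancel_left₀ _ two_ne_zero,
    sq_sqrt (neg_pos.2 hz).le, neg_neg]

theorem two_mul_sqrt_neg_mem_Ioc {z : ℝ} (hx : 0 < x) (hz : z ∈ Ico (-(x / 2) ^ 2) 0) :
    2 * √(-z) ∈ Ioc 0 x := by
  have hsqrt : √(-z) ≤ x / 2 := sqrt_le_iff.2 ⟨by positivity, by linarith [hz.1]⟩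
  exact ⟨by have := sqrt_pos.2 (neg_pos.2 hz.2); positivity, by linarith⟩

theorem besselJ_sub_one (ν : ℝ) (hx : 0 < x) :
    besselJ (ν - 1) x = 2 * ν / x * besselJ ν x - besselJ (ν + 1) x := by
  have hx2 := half_pos hx
  simp only [besselJ_eq_rpow_mul_besselClifford _ hx, besselClifford_sub_one ν,
    rpow_sub_one hx2.ne', rpow_add_one hx2.ne']
  field_simp
  ring

theorem hasDerivAt_besselJ (ν : ℝ) (hx : 0 < x) :
    HasDerivAt (besselJ ν) (ν / x * besselJ ν x - besselJ (ν + 1) x) x := by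
  have hx2 := half_pos hx
  have hhalf : HasDerivAt (fun t : ℝ ↦ t / 2) (1 / 2) x := (hasDerivAt_id x).div_const 2
  have hpow : HasDerivAt (fun t : ℝ ↦ (t / 2) ^ ν) (1 / 2 * ν * (x / 2) ^ (ν - 1)) x :=
    hhalf.rpow_const (Or.inl hx2.ne')
  have hsq : HasDerivAt (fun t : ℝ ↦ -(t / 2) ^ 2) (-(x / 2)) x :=
    (hhalf.fun_pow 2).fun_neg.congr_deriv (by ring)
  have hclifford : HasDerivAt (fun t ↦ besselClifford ν (-(t / 2) ^ 2))
      (besselClifford (ν + 1) (-(x / 2) ^ 2) * -(x / 2)) x :=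
    HasDerivAt.comp (h₂ := besselClifford ν) x (hasDerivAt_besselClifford ν _) hsq
  refine ((hpow.mul hclifford).congr_deriv ?_).congr_of_eventuallyEq ?_
  · simp only [besselJ_eq_rpow_mul_besselClifford _ hx, rpow_sub_one hx2.ne',
      rpow_add_one hx2.ne']
    field_simp
    ring
  · filter_upwards [Ioi_mem_nhds hx] with t ht
    exact besselJ_eq_rpow_mul_besselClifford ν ht

theorem besselJ_wronskian (ν : ℝ) (hx : 0 < x) :
    besselJ (-ν) x * besselJ (ν - 1) x + besselJ ν x * besselJ (1 - ν) x
      = 2 * sin (π * ν) / (π * x) := by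
  have hx2 := half_pos hx
  have hpow : (x / 2) ^ ν ≠ 0 := (rpow_pos_of_pos hx2 ν).ne'
  have hW := besselClifford_wronskian ν (-(x / 2) ^ 2)
  simp only [besselJ_eq_rpow_mul_besselClifford _ hx, rpow_sub_one hx2.ne', rpow_neg hx2.le,
    rpow_sub hx2, rpow_one]
  rw [show 2 * sin (π * ν) / (π * x) = 2 / x * (sin (π * ν) / π) by ring, ← hW]
  field_simp
  ring

theorem besselJ_pos_of_ne_zero (hΓ : 0 < Gamma (ν + 1))
    (hne : ∀ t ∈ Ioc 0 x, besselJ ν t ≠ 0) {t : ℝ} (ht : t ∈ Ioc 0 x) : 0 < besselJ ν t := by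
  rw [besselJ_eq_rpow_mul_besselClifford ν ht.1]
  refine mul_pos (rpow_pos_of_pos (half_pos ht.1) ν) ?_
  by_contra! hnonpos
  have hzero : 0 < besselClifford ν 0 := by rw [besselClifford_zero]; positivity
  obtain ⟨z, hz, hroot⟩ := intermediate_value_Ico (neg_nonpos.2 (sq_nonneg (t / 2)))
    (continuous_besselClifford ν).continuousOn ⟨hnonpos, hzero⟩
  have hmem := two_mul_sqrt_neg_mem_Ioc ht.1 hz
  apply hne _ ⟨hmem.1, hmem.2.trans ht.2⟩
  rw [besselJ_two_mul_sqrt_neg ν hz.2, hroot, mul_zero]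

theorem besselJ_sub_one_neg (hx : 0 < x) (hΓ : Gamma ν < 0)
    (hpos : ∀ t ∈ Ioc 0 x, 0 < besselJ ν t) : besselJ (ν - 1) x < 0 := by
  have clifford_pos (z : ℝ) (hz : z ∈ Ico (-(x / 2) ^ 2) 0) : 0 < besselClifford ν z := by
    have h := hpos _ (two_mul_sqrt_neg_mem_Ioc hx hz)
    rw [besselJ_two_mul_sqrt_neg ν hz.2] at h
    exact pos_of_mul_pos_right h (by positivity)
  have clifford_mono : MonotoneOn (besselClifford (ν - 1)) (Icc (-(x / 2) ^ 2) 0) := by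
    refine monotoneOn_of_hasDerivWithinAt_nonneg (convex_Icc _ _)
      (continuous_besselClifford _).continuousOn
      (fun z _ ↦ (hasDerivAt_besselClifford (ν - 1) z).hasDerivWithinAt) fun z hz ↦ ?_
    rw [interior_Icc] at hz
    rw [sub_add_cancel]
    exact (clifford_pos z (Ioo_subset_Ico_self hz)).le
  have hend : -(x / 2) ^ 2 ≤ 0 := neg_nonpos.2 (sq_nonneg _)
  rw [besselJ_eq_rpow_mul_besselClifford _ hx]
  refine mul_neg_of_pos_of_neg (rpow_pos_of_pos (half_pos hx) _) ?_
  calc besselClifford (ν - 1) (-(x / 2) ^ 2)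
      ≤ besselClifford (ν - 1) 0 :=
        clifford_mono (left_mem_Icc.2 hend) (right_mem_Icc.2 hend) hend
    _ = (Gamma ν)⁻¹ := by rw [besselClifford_zero, sub_add_cancel]
    _ < 0 := inv_lt_zero.2 hΓ

theorem hasDerivAt_besselJ_neg_div_besselJ (hx : 0 < x) (hne : besselJ ν x ≠ 0) :
    HasDerivAt (fun t ↦ besselJ (-ν) t / besselJ ν t)
      (-(2 * sin (π * ν) / (π * x)) / besselJ ν x ^ 2) x := by
  refine ((hasDerivAt_besselJ (-ν) hx).div (hasDerivAt_besselJ ν hx) hne).congr_deriv ?_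
  rw [← besselJ_wronskian ν hx, besselJ_sub_one ν hx, neg_add_eq_sub]
  ring

theorem monotoneOn_besselJ_neg_div_besselJ (hsin : sin (π * ν) ≤ 0)
    (hne : ∀ t ∈ Ioc 0 x, besselJ ν t ≠ 0) :
    MonotoneOn (fun t ↦ besselJ (-ν) t / besselJ ν t) (Ioc 0 x) := by
  have hderiv (t : ℝ) (ht : t ∈ Ioc 0 x) := hasDerivAt_besselJ_neg_div_besselJ ht.1 (hne t ht)
  refine monotoneOn_of_hasDerivWithinAt_nonneg (convex_Ioc 0 x)
    (fun t ht ↦ (hderiv t ht).continuousAt.continuousWithinAt)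
    (fun t ht ↦ (hderiv t (interior_subset ht)).hasDerivWithinAt) fun t ht ↦ ?_
  have ht0 : 0 < t := (interior_subset ht).1
  refine div_nonneg (neg_nonneg.2 (div_nonpos_of_nonpos_of_nonneg ?_ ?_)) (sq_nonneg _)
  · linarith
  · positivity

theorem besselJ_cross_product_neg {y : ℝ} (hν : ν < 0) (hsin : sin (π * ν) < 0)
    (hy : 0 < y) (hyx : y ≤ x) (hne : ∀ t ∈ Ioc 0 x, besselJ ν t ≠ 0) :
    besselJ (-ν) x * besselJ (ν - 1) y + besselJ ν x * besselJ (1 - ν) y < 0 := by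
  have hΓ : Gamma ν < 0 := Gamma_neg_of_sin_pi_mul_neg (hν.trans one_pos) hsin
  have hΓ' : 0 < Gamma (ν + 1) := by
    rw [Gamma_add_one hν.ne]
    exact mul_pos_of_neg_of_neg hν hΓ
  have hx_mem : x ∈ Ioc 0 x := ⟨hy.trans_le hyx, le_rfl⟩
  have hy_mem : y ∈ Ioc 0 x := ⟨hy, hyx⟩
  have hpos (t : ℝ) (ht : t ∈ Ioc 0 x) : 0 < besselJ ν t := besselJ_pos_of_ne_zero hΓ' hne ht
  have hx_pos := hpos x hx_mem
  have hy_pos := hpos y hy_mem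
  have hsub_neg : besselJ (ν - 1) y < 0 :=
    besselJ_sub_one_neg hy hΓ fun t ht ↦ hpos t ⟨ht.1, ht.2.trans hyx⟩
  have hratio : besselJ (-ν) y / besselJ ν y ≤ besselJ (-ν) x / besselJ ν x :=
    monotoneOn_besselJ_neg_div_besselJ hsin.le hne hy_mem hx_mem hyx
  calc besselJ (-ν) x * besselJ (ν - 1) y + besselJ ν x * besselJ (1 - ν) y
      = besselJ ν x * (besselJ (-ν) x / besselJ ν x * besselJ (ν - 1) y + besselJ (1 - ν) y) := by
        field_simp
    _ ≤ besselJ ν x * (besselJ (-ν) y / besselJ ν y * besselJ (ν - 1) y + besselJ (1 - ν) y) := by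
        gcongr ?_ * (?_ + _)
        exact mul_le_mul_of_nonpos_right hratio hsub_neg.le
    _ = besselJ ν x / besselJ ν y *
          (besselJ (-ν) y * besselJ (ν - 1) y + besselJ ν y * besselJ (1 - ν) y) := by
        field_simp
    _ = besselJ ν x / besselJ ν y * (2 * sin (π * ν) / (π * y)) := by rw [besselJ_wronskian ν hy]
    _ < 0 := mul_neg_of_pos_of_neg (div_pos hx_pos hy_pos)
        (div_neg_of_neg_of_pos (by linarith) (by positivity))

end BesselJ

/-- **Key inequality for Lemma 3.1.** For `α ∈ (4n−3, 4n−1)`, `ν = (1−α)/2` and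
`0 < λ < j²_{ν,1}`, one has
`J_{−ν}(s₀√λ)·J_{ν−1}(r√λ) + J_ν(s₀√λ)·J_{1−ν}(r√λ) ≤ 0` for `0 < r ≤ s₀ ≤ 1`. -/
theorem besselJ_derivative_combination_nonpos (n : ℕ) (hn : 1 ≤ n) (α lam ν : ℝ)
    (hα1 : 4 * (n : ℝ) - 3 < α) (hα2 : α < 4 * (n : ℝ) - 1)
    (hν : ν = (1 - α) / 2)
    (hlam : 0 < lam)
    (hzero : ∀ t : ℝ, 0 < t → t ≤ Real.sqrt lam → besselJ ν t ≠ 0) :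
    ∀ r s₀ : ℝ, 0 < r → r ≤ s₀ → s₀ ≤ 1 →
      besselJ (-ν) (s₀ * Real.sqrt lam) * besselJ (ν - 1) (r * Real.sqrt lam)
        + besselJ ν (s₀ * Real.sqrt lam) * besselJ (1 - ν) (r * Real.sqrt lam) ≤ 0 := by
  intro r s₀ hr hrs hs
  have hsqrt : 0 < √lam := sqrt_pos.2 hlam
  have hn' : (1 : ℝ) ≤ n := by exact_mod_cast hn
  have hsin : sin (π * ν) < 0 := sin_pi_mul_neg_of_mem_Ioo (k := 1 - n) <| by
    push_cast
    constructor <;> linarith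
  refine (besselJ_cross_product_neg (by linarith) hsin (by positivity) (by gcongr) ?_).le
  exact fun t ht ↦ hzero t ht.1 (ht.2.trans (mul_le_of_le_one_left hsqrt.le hs))
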